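/- Let ν be a σ-finite Borel measure on the solenoid S_N that is quasi-invariant for the shift S, let θ : S_N → 𝕋 be measurable, and let Δ = d(ν∘S)/dν. Then: (1) the operators Uξ = √Δ·θ·(ξ∘S) and (Tξ)((z_n)_n) = z₀·ξ((z_n)_n) on L²(ν) are unitary and satisfy UTU⁻¹ = Tᴺ, so they define a unitary representation π_{ν,θ} of BS(1,N); (2) for f ∈ L^∞(ν) and n ∈ ℤ, UⁿM_fU⁻ⁿ = M_{f∘Sⁿ}, for n, k ∈ ℤ the operator U⁻ⁿT^kUⁿ is multiplication by the character χ_{k/Nⁿ}, and the von Neumann algebra generated by {UⁿT^kU⁻ⁿ : n, k ∈ ℤ} is {M_f : f ∈ L^∞(ν)}; (3) the commutant of π_{ν,θ} is {M_f : f ∈ L^∞(ν), f∘S = f ν-a.e.}, so π_{ν,θ} is irreducible if and only if S is ergodic with respect to ν. -/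

import Mathlib

noncomputable section

open MeasureTheory Real Complex Filter Finset
open scoped ENNReal

/-! ### Basic instances for the circle -/

instance : MeasurableSpace Circle := borel Circle
instance : BorelSpace Circle := ⟨rfl⟩

/-- The point `e^{-2πit}` of the unit circle. -/
def ee (t : ℝ) : Circle := Circle.exp (-(2 * π * t))

/-- Normalized Lebesgue measure on the circle, realized as the image of Lebesgue
measure on `[0,1)` under `t ↦ e^{-2πit}`. -/
def circleMeasure : Measure Circle := (volume.restrict (Set.Ico (0:ℝ) 1)).map ee

/-! ### The Baumslag–Solitar group `BS(1,N)` -/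

/-- The single relation `u t u⁻¹ (t^N)⁻¹` defining `BS(1,N)`. -/
def BSRel (N : ℕ) : Set (FreeGroup Bool) :=
  {FreeGroup.of true * FreeGroup.of false * (FreeGroup.of true)⁻¹ * ((FreeGroup.of false) ^ N)⁻¹}

/-- The Baumslag–Solitar group `BS(1,N) = ⟨u,t | u t u⁻¹ = t^N⟩`. -/
abbrev BS (N : ℕ) := PresentedGroup (BSRel N)

/-- The generator `u` of `BS(1,N)`. -/
def BS.u (N : ℕ) : BS N := PresentedGroup.of true

/-- The generator `t` of `BS(1,N)`. -/
def BS.t (N : ℕ) : BS N := PresentedGroup.of false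

/-! ### The solenoid -/

/-- The `N`-solenoid, as a subgroup of the product of circles indexed by `ℤ`:
all sequences `(z_n)` with `z_{n+1}^N = z_n`. -/
def solenoidGroup (N : ℕ) : Subgroup (ℤ → Circle) where
  carrier := {z | ∀ n : ℤ, z (n + 1) ^ N = z n}
  one_mem' := by intro n; simp
  mul_mem' := by
    intro a b ha hb n
    simp only [Set.mem_setOf_eq, Pi.mul_apply, mul_pow] at *
    rw [ha n, hb n]
  inv_mem' := by
    intro a ha n
    simp only [Set.mem_setOf_eq, Pi.inv_apply, inv_pow] at *
    rw [ha n]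

/-- The `N`-solenoid as a type. -/
abbrev Solenoid (N : ℕ) := ↥(solenoidGroup N)

/-- The shift `S` on the solenoid: `(S z)_n = z_{n-1}`. -/
def shift (N : ℕ) (z : Solenoid N) : Solenoid N :=
  ⟨fun n => z.val (n - 1), by
    intro n
    have h := z.property (n - 1)
    simpa using h⟩

/-- The inverse `S⁻¹` of the shift on the solenoid: `(S⁻¹ z)_n = z_{n+1}`. -/
def shiftInv (N : ℕ) (z : Solenoid N) : Solenoid N :=
  ⟨fun n => z.val (n + 1), fun n => z.property (n + 1)⟩

/-- Integer powers `Sⁿ` of the shift. -/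
def shiftZ (N : ℕ) (n : ℤ) : Solenoid N → Solenoid N :=
  if 0 ≤ n then (shift N)^[n.toNat] else (shiftInv N)^[(-n).toNat]

/-- The measure `ν ∘ S`, defined by `(ν ∘ S)(E) = ν(S(E))`. -/
def measShift (N : ℕ) (ν : Measure (Solenoid N)) : Measure (Solenoid N) :=
  ν.map (shiftInv N)

/-- `ν` is quasi-invariant for the shift `S`: `ν ∘ S` and `ν` are mutually
absolutely continuous. -/
def QuasiInvariant (N : ℕ) (ν : Measure (Solenoid N)) : Prop :=
  measShift N ν ≪ ν ∧ ν ≪ measShift N ν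

/-- The shift `S` is ergodic with respect to `ν`. -/
def ShiftErgodic (N : ℕ) (ν : Measure (Solenoid N)) : Prop :=
  ∀ E : Set (Solenoid N), MeasurableSet E → shift N ⁻¹' E = E → ν E = 0 ∨ ν Eᶜ = 0

/-- A bounded measurable (`L^∞`-type) function. -/
def BddMeasurable {α : Type*} [MeasurableSpace α] (f : α → ℂ) : Prop :=
  Measurable f ∧ ∃ C : ℝ, ∀ x, ‖f x‖ ≤ C

/-! ### The representation `π_{ν,θ}` -/

/-- The pair of unitaries `U, T` on `L²(ν)` given by
`Uξ = √Δ ⬝ θ ⬝ (ξ∘S)` (with `Δ = d(ν∘S)/dν`) and `(Tξ)(z) = z₀ ξ(z)`. -/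
def IsPiNuTheta (N : ℕ) (ν : Measure (Solenoid N)) (θ : Solenoid N → Circle)
    (U T : unitary (Lp ℂ 2 ν →L[ℂ] Lp ℂ 2 ν)) : Prop :=
  (∀ ξ : Lp ℂ 2 ν,
      (((U : Lp ℂ 2 ν →L[ℂ] Lp ℂ 2 ν) ξ : Lp ℂ 2 ν) : Solenoid N → ℂ) =ᵐ[ν]
        fun z => (Real.sqrt (((measShift N ν).rnDeriv ν z).toReal) : ℂ) * (θ z : ℂ) *
          (ξ : Solenoid N → ℂ) (shift N z)) ∧
  (∀ ξ : Lp ℂ 2 ν,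
      (((T : Lp ℂ 2 ν →L[ℂ] Lp ℂ 2 ν) ξ : Lp ℂ 2 ν) : Solenoid N → ℂ) =ᵐ[ν]
        fun z => ((z.val 0 : Circle) : ℂ) * (ξ : Solenoid N → ℂ) z)

/-- `φ` is a cyclic vector for the (unitary) representation generated by `U` and `T`:
the only closed subspace containing `φ` and invariant under the group generated by
`U` and `T` is the whole space. -/
def cyclicVector {H : Type*} [NormedAddCommGroup H] [InnerProductSpace ℂ H]
    [CompleteSpace H] (U T : unitary (H →L[ℂ] H)) (φ : H) : Prop :=
  ∀ K : Submodule ℂ H, IsClosed (K : Set H) → φ ∈ K →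
    (∀ g ∈ Subgroup.closure ({U, T} : Set (unitary (H →L[ℂ] H))),
      ∀ v ∈ K, (g : H →L[ℂ] H) v ∈ K) → K = ⊤

/-! ### Filters and the Ruelle operator -/

/-- The quadrature mirror filter condition `R_{m₀} 1 = 1`, written out on `[0,1)`:
`(1/N) ∑_{k<N} |m₀(e^{-2πi(x+k)/N})|² = 1` for a.e. `x`. -/
def QMF (N : ℕ) (m₀ : Circle → ℂ) : Prop :=
  ∀ᵐ x ∂(volume.restrict (Set.Ico (0:ℝ) 1)),
    (1 / N : ℝ) * ∑ k ∈ Finset.range N, ‖m₀ (ee ((x + k) / N))‖ ^ 2 = 1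

/-- `h` is a fixed point of the Ruelle operator `R_{m₀}`:
`(1/N) ∑_{w^N = z} |m₀(w)|² h(w) = h(z)` for a.e. `z`, written out on `[0,1)`. -/
def RuelleFixed (N : ℕ) (m₀ : Circle → ℂ) (h : Circle → ℂ) : Prop :=
  ∀ᵐ x ∂(volume.restrict (Set.Ico (0:ℝ) 1)),
    (1 / N : ℂ) * ∑ k ∈ Finset.range N,
        (‖m₀ (ee ((x + k) / N))‖ ^ 2 : ℝ) * h (ee ((x + k) / N)) = h (ee x)

/-- The wavelet representation of `BS(1,N)` associated to a filter `m₀`, realized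
on `L²(m)` for a measure `m` on the solenoid: `Uξ = m₀ ⬝ (ξ∘S)` and `T` is
multiplication by the coordinate `z₀`. -/
def IsWaveletRepOn (N : ℕ) (m₀ : Circle → ℂ) (m : Measure (Solenoid N))
    (U T : unitary (Lp ℂ 2 m →L[ℂ] Lp ℂ 2 m)) : Prop :=
  (∀ ξ : Lp ℂ 2 m,
      (((U : Lp ℂ 2 m →L[ℂ] Lp ℂ 2 m) ξ : Lp ℂ 2 m) : Solenoid N → ℂ) =ᵐ[m]
        fun z => m₀ (z.val 0) * (ξ : Solenoid N → ℂ) (shift N z)) ∧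
  (∀ ξ : Lp ℂ 2 m,
      (((T : Lp ℂ 2 m →L[ℂ] Lp ℂ 2 m) ξ : Lp ℂ 2 m) : Solenoid N → ℂ) =ᵐ[m]
        fun z => ((z.val 0 : Circle) : ℂ) * (ξ : Solenoid N → ℂ) z)

/-- The measure `m` on the solenoid associated to a weight `W` (with `N W = |m₀|²`):
its `z₀`-marginal is normalized Lebesgue measure on the circle, and
`d(m∘S)/dm = N W`. -/
def IsAssociatedMeasure (N : ℕ) (W : Circle → ℝ) (m : Measure (Solenoid N)) : Prop :=
  IsProbabilityMeasure m ∧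
  m.map (fun z : Solenoid N => z.val 0) = circleMeasure ∧
  measShift N m = m.withDensity (fun z => ENNReal.ofReal (N * W (z.val 0)))

end

/-! Conjugating `T` by the powers of `U` produces multiplication by every character of `S_N`. The
characters separate points and are closed under conjugation, so the Stone–Weierstrass theorem and a
functional monotone class argument show that an operator commuting with them commutes with every
`M_f`; since `ν` is σ-finite, these operators form a maximal abelian algebra, so it is itself some
`M_g`. It commutes with `U` as well exactly when `g ∘ S = g` almost everywhere, because
`U M_g U⁻¹ = M_{g ∘ S}`. Irreducibility thus says that all invariant bounded functions are constant,
which is ergodicity. -/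

noncomputable section Development

open MeasureTheory Filter Topology
open scoped ENNReal

section BoundedMeasurable

variable {X Y : Type*} [MeasurableSpace X] [MeasurableSpace Y]

/-- The ⋆-algebra `ℒ^∞(X)` of bounded measurable functions. Its elements are functions rather than
classes modulo null sets, so that pointwise limits and compositions make sense in it. -/
def boundedMeasurable (X : Type*) [MeasurableSpace X] : StarSubalgebra ℂ (X → ℂ) where
  carrier := {f | BddMeasurable f}
  mul_mem' := by
    rintro f g ⟨hf, C, hC⟩ ⟨hg, D, hD⟩
    exact ⟨hf.mul hg, C * D, fun x => norm_mul_le_of_le (hC x) (hD x)⟩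
  add_mem' := by
    rintro f g ⟨hf, C, hC⟩ ⟨hg, D, hD⟩
    exact ⟨hf.add hg, C + D, fun x => norm_add_le_of_le (hC x) (hD x)⟩
  algebraMap_mem' c := ⟨measurable_const, ‖c‖, fun _ => le_rfl⟩
  star_mem' := by
    rintro f ⟨hf, C, hC⟩
    exact ⟨continuous_star.measurable.comp hf, C, fun x => (norm_star (f x)).trans_le (hC x)⟩

namespace boundedMeasurable

/-- The indicator function of a measurable set, as a bounded measurable function. -/
def indicator {E : Set X} (hE : MeasurableSet E) : boundedMeasurable X :=
  ⟨E.indicator 1, measurable_one.indicator hE, 1, fun x => by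
    by_cases hx : x ∈ E <;> simp [hx]⟩

@[simp]
theorem coe_indicator {E : Set X} (hE : MeasurableSet E) :
    (indicator hE : X → ℂ) = E.indicator 1 := rfl

/-- The composition `f ∘ S` of a bounded measurable function with a measurable map. -/
def comp (f : boundedMeasurable Y) {S : X → Y} (hS : Measurable S) : boundedMeasurable X :=
  ⟨f ∘ S, f.2.1.comp hS, f.2.2.imp fun _ hC x => hC (S x)⟩

@[simp]
theorem coe_comp (f : boundedMeasurable Y) {S : X → Y} (hS : Measurable S) :
    (comp f hS : X → ℂ) = f ∘ S := rfl

/-- A simple function, as a bounded measurable function. -/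
def ofSimpleFunc (f : SimpleFunc X ℂ) : boundedMeasurable X :=
  ⟨f, f.measurable, f.exists_forall_norm_le⟩

@[simp]
theorem coe_ofSimpleFunc (f : SimpleFunc X ℂ) : (ofSimpleFunc f : X → ℂ) = f := rfl

/-- The inclusion `C(X) → ℒ^∞(X)` for a compact space `X`. -/
def ofContinuousMap [TopologicalSpace X] [CompactSpace X] [OpensMeasurableSpace X] :
    C(X, ℂ) →ₐ[ℂ] boundedMeasurable X :=
  (ContinuousMap.coeFnAlgHom ℂ).codRestrict (boundedMeasurable X).toSubalgebra fun f =>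
    ⟨f.continuous.measurable, ‖f‖, f.norm_coe_le_norm⟩

@[simp]
theorem coe_ofContinuousMap [TopologicalSpace X] [CompactSpace X] [OpensMeasurableSpace X]
    (f : C(X, ℂ)) : (ofContinuousMap f : X → ℂ) = f := rfl

end boundedMeasurable

open boundedMeasurable

/-- A set of bounded measurable functions is closed under bounded pointwise convergence if it
contains every pointwise limit of a uniformly bounded sequence of its elements: the closure
property required by the functional monotone class theorem. -/
def IsBddPointwiseClosed (V : Set (boundedMeasurable X)) : Prop :=
  ∀ (f : ℕ → boundedMeasurable X) (g : boundedMeasurable X) (C : ℝ), (∀ n, f n ∈ V) →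
    (∀ n x, ‖(f n : X → ℂ) x‖ ≤ C) →
    (∀ x, Tendsto (fun n => (f n : X → ℂ) x) atTop (𝓝 ((g : X → ℂ) x))) → g ∈ V

namespace IsBddPointwiseClosed

variable {V : Subalgebra ℂ (boundedMeasurable X)}

theorem ofSimpleFunc_mem (hind : ∀ {E : Set X} (hE : MeasurableSet E), indicator hE ∈ V)
    (f : SimpleFunc X ℂ) : ofSimpleFunc f ∈ V := by
  induction f using SimpleFunc.induction with
  | @const c E hE =>
    convert V.smul_mem (hind hE) c
    ext x
    by_cases hx : x ∈ E <;> simp [hx]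
  | add _ hf hg => exact V.add_mem hf hg

theorem eq_top_of_indicator_mem (hV : IsBddPointwiseClosed (V : Set (boundedMeasurable X)))
    (hind : ∀ {E : Set X} (hE : MeasurableSet E), indicator hE ∈ V) : V = ⊤ := by
  refine Algebra.eq_top_iff.2 fun f => ?_
  obtain ⟨C, hC⟩ := f.2.2
  have hf := f.2.1.stronglyMeasurable
  refine hV (fun n => ofSimpleFunc (hf.approxBounded |C| n)) f |C|
    (fun n => ofSimpleFunc_mem hind _) (fun n x => hf.norm_approxBounded_le (abs_nonneg C) n x)
    fun x => hf.tendsto_approxBounded_of_norm_le ((hC x).trans (le_abs_self C))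

theorem indicator_iUnion_mem (hV : IsBddPointwiseClosed (V : Set (boundedMeasurable X)))
    {E : ℕ → Set X} (hdisj : Pairwise (Function.onFun Disjoint E))
    (hE : ∀ i, MeasurableSet (E i)) (hmem : ∀ i, indicator (hE i) ∈ V) :
    indicator (MeasurableSet.iUnion hE) ∈ V := by
  have hpartial (n : ℕ) (x : X) : ((∑ i ∈ Finset.range n, indicator (hE i) : boundedMeasurable X) :
      X → ℂ) x = (⋃ i ∈ Finset.range n, E i).indicator 1 x := by
    rw [Finset.indicator_biUnion _ _ (hdisj.set_pairwise _)]
    simp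
  refine hV (fun n => ∑ i ∈ Finset.range n, indicator (hE i)) _ 1
    (fun n => V.sum_mem fun i _ => hmem i) (fun n x => ?_) fun x => ?_
  · rw [hpartial]
    exact (norm_indicator_le_norm_self (1 : X → ℂ) x).trans (by simp)
  · simp only [hpartial]
    exact ((tendsto_indicator_biUnion_finset E 1 x).comp tendsto_finset_range).mono_right
      (pure_le_nhds _)

variable [TopologicalSpace X] [CompactSpace X] [BorelSpace X]

theorem ofContinuousMap_mem (hV : IsBddPointwiseClosed (V : Set (boundedMeasurable X)))
    {G : Set C(X, ℂ)} (hsep : ((fun f : C(X, ℂ) => (f : X → ℂ)) '' G).SeparatesPoints)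
    (hstar : ∀ g ∈ G, star g ∈ G) (hG : ∀ g ∈ G, ofContinuousMap g ∈ V) (f : C(X, ℂ)) :
    ofContinuousMap f ∈ V := by
  have hadjoin : (StarAlgebra.adjoin ℂ G).toSubalgebra ≤ V.comap ofContinuousMap := by
    rw [StarAlgebra.adjoin_toSubalgebra]
    exact Algebra.adjoin_le (Set.union_subset hG fun g hg => hG g (by simpa using hstar _ hg))
  have hdense : f ∈ closure (StarAlgebra.adjoin ℂ G : Set C(X, ℂ)) := by
    rw [← StarSubalgebra.topologicalClosure_coe,
      ContinuousMap.starSubalgebra_topologicalClosure_eq_top_of_separatesPoints]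
    · trivial
    · intro x y hxy
      obtain ⟨_, ⟨g, hg, rfl⟩, hgxy⟩ := hsep hxy
      exact ⟨g, ⟨g, StarAlgebra.subset_adjoin ℂ G hg, rfl⟩, hgxy⟩
  obtain ⟨g, hg, hlim⟩ := mem_closure_iff_seq_limit.1 hdense
  obtain ⟨C, hC⟩ := (Metric.isBounded_range_of_tendsto g hlim).exists_norm_le
  refine hV (fun n => ofContinuousMap (g n)) _ C (fun n => hadjoin (hg n))
    (fun n x => ((g n).norm_coe_le_norm x).trans (hC _ ⟨n, rfl⟩)) fun x => ?_
  exact ((continuous_eval_const x).tendsto f).comp hlim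

variable [HasOuterApproxClosed X]

theorem indicator_mem_of_isClosed (hV : IsBddPointwiseClosed (V : Set (boundedMeasurable X)))
    (hcont : ∀ f : C(X, ℂ), ofContinuousMap f ∈ V) {F : Set X} (hF : IsClosed F) :
    indicator hF.measurableSet ∈ V := by
  let approx (n : ℕ) : C(X, ℂ) :=
    ⟨fun x => ((hF.apprSeq n x : ℝ) : ℂ), by fun_prop⟩
  refine hV (fun n => ofContinuousMap (approx n)) _ 1 (fun n => hcont _) (fun n x => ?_) fun x => ?_
  · simpa [approx] using HasOuterApproxClosed.apprSeq_apply_le_one hF n x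
  · have hlim := (tendsto_pi_nhds.1 (HasOuterApproxClosed.tendsto_apprSeq hF) x)
    have hval : (indicator hF.measurableSet : X → ℂ) x =
        ((F.indicator (fun _ => 1) x : NNReal) : ℝ) := by
      by_cases hx : x ∈ F <;> simp [hx]
    rw [hval]
    exact ((NNReal.continuous_coe.tendsto _).comp hlim).ofReal

/-- Functional monotone class theorem, in the form suggested by the Stone–Weierstrass theorem. -/
theorem eq_top_of_separatesPoints (hV : IsBddPointwiseClosed (V : Set (boundedMeasurable X)))
    {G : Set C(X, ℂ)} (hsep : ((fun f : C(X, ℂ) => (f : X → ℂ)) '' G).SeparatesPoints)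
    (hstar : ∀ g ∈ G, star g ∈ G) (hG : ∀ g ∈ G, ofContinuousMap g ∈ V) : V = ⊤ := by
  have hgen := (BorelSpace.measurable_eq (α := X)).trans borel_eq_generateFrom_isClosed
  refine hV.eq_top_of_indicator_mem fun {E} hE => ?_
  induction E, hE using MeasurableSpace.induction_on_inter hgen isPiSystem_isClosed with
  | empty =>
    convert V.zero_mem
    ext x
    simp
  | basic F hF =>
    exact hV.indicator_mem_of_isClosed (hV.ofContinuousMap_mem hsep hstar hG) hF
  | compl E hE ih =>
    convert V.sub_mem V.one_mem ih
    ext x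
    by_cases hx : x ∈ E <;> simp [hx]
  | iUnion E hdisj hE ih => exact hV.indicator_iUnion_mem hdisj hE ih

end IsBddPointwiseClosed

end BoundedMeasurable

section MultiplicationOperators

variable {X : Type*} [MeasurableSpace X] {ν : Measure X} {p : ℝ≥0∞}

namespace boundedMeasurable

theorem memLp_top (f : boundedMeasurable X) (ν : Measure X) : MemLp (f : X → ℂ) ∞ ν := by
  obtain ⟨hf, C, hC⟩ := f.2
  exact memLp_top_of_bound hf.aestronglyMeasurable C (.of_forall hC)

/-- The canonical map `ℒ^∞ → L^∞(ν)`. -/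
def toLpTop (ν : Measure X) : boundedMeasurable X →ₗ[ℂ] Lp ℂ ∞ ν where
  toFun f := (memLp_top f ν).toLp f
  map_add' f g := MemLp.toLp_add (memLp_top f ν) (memLp_top g ν)
  map_smul' c f := MemLp.toLp_const_smul c (memLp_top f ν)

end boundedMeasurable

open boundedMeasurable

theorem tendsto_eLpNorm_zero_of_dominated {E : Type*} [NormedAddCommGroup E] (hp₀ : p ≠ 0)
    (hp : p ≠ ∞) {F : ℕ → X → E} {bound : X → ℝ} (hF : ∀ n, AEStronglyMeasurable (F n) ν)
    (hbound : MemLp bound p ν) (hle : ∀ n, ∀ᵐ x ∂ν, ‖F n x‖ ≤ bound x)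
    (hlim : ∀ᵐ x ∂ν, Tendsto (fun n => F n x) atTop (𝓝 0)) :
    Tendsto (fun n => eLpNorm (F n) p ν) atTop (𝓝 0) := by
  have hpos : 0 < p.toReal := ENNReal.toReal_pos hp₀ hp
  have hlintegral : Tendsto (fun n => ∫⁻ x, ‖F n x‖ₑ ^ p.toReal ∂ν) atTop
      (𝓝 (∫⁻ _, 0 ∂ν)) := by
    refine tendsto_lintegral_of_dominated_convergence' (fun x => ‖bound x‖ₑ ^ p.toReal)
      (fun n => (hF n).enorm.pow_const _) (fun n => ?_)
      ((eLpNorm_lt_top_iff_lintegral_rpow_enorm_lt_top hp₀ hp).1 hbound.2).ne ?_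
    · filter_upwards [hle n] with x hx
      exact ENNReal.rpow_le_rpow
        (enorm_le_iff_norm_le.2 (hx.trans (Real.le_norm_self _))) hpos.le
    · filter_upwards [hlim] with x hx
      simpa [ENNReal.zero_rpow_of_pos hpos] using hx.enorm.ennrpow_const p.toReal
  simp only [eLpNorm_eq_lintegral_rpow_enorm_toReal hp₀ hp]
  simpa [hpos] using hlintegral.ennrpow_const (1 / p.toReal)

theorem ae_norm_le_of_forall_eLpNorm_restrict_le [SigmaFinite ν] {E F : Type*}
    [NormedAddCommGroup E] [NormedAddCommGroup F] (hp₀ : p ≠ 0) (hp : p ≠ ∞) {f : X → E}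
    {g : X → F} (hf : AEStronglyMeasurable f ν)
    (h : ∀ s, MeasurableSet s → eLpNorm f p (ν.restrict s) ≤ eLpNorm g p (ν.restrict s)) :
    ∀ᵐ x ∂ν, ‖f x‖ ≤ ‖g x‖ := by
  have hpos : 0 < p.toReal := ENNReal.toReal_pos hp₀ hp
  have hrpow : (fun x => ‖f x‖ₑ ^ p.toReal) ≤ᵐ[ν] fun x => ‖g x‖ₑ ^ p.toReal := by
    refine ae_le_of_forall_setLIntegral_le_of_sigmaFinite₀ (hf.enorm.pow_const _) fun s hs _ => ?_
    have hs := h s hs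
    simp only [eLpNorm_eq_lintegral_rpow_enorm_toReal hp₀ hp] at hs
    exact (ENNReal.rpow_le_rpow_iff (by positivity)).1 hs
  filter_upwards [hrpow] with x hx
  exact enorm_le_iff_norm_le.1 ((ENNReal.rpow_le_rpow_iff hpos).1 hx)

theorem exists_Lp_ae_ne_zero [SigmaFinite ν] (hp₀ : p ≠ 0) (hp : p ≠ ∞) :
    ∃ φ : Lp ℂ p ν, ∀ᵐ x ∂ν, φ x ≠ 0 := by
  have hpos : 0 < p.toReal := ENNReal.toReal_pos hp₀ hp
  obtain ⟨g, hg_pos, hg_meas, hg_int⟩ :=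
    exists_pos_lintegral_lt_of_sigmaFinite ν (ε := 1) one_ne_zero
  let φ : X → ℂ := fun x => ((g x ^ (1 / p.toReal) : NNReal) : ℝ)
  have hφ : MemLp φ p ν := by
    refine ⟨by fun_prop, (eLpNorm_lt_top_iff_lintegral_rpow_enorm_lt_top hp₀ hp).2 ?_⟩
    have henorm (x : X) : ‖φ x‖ₑ ^ p.toReal = g x := by
      have hnnnorm : ‖φ x‖₊ = g x ^ (1 / p.toReal) := by
        rw [Complex.nnnorm_real, NNReal.nnnorm_eq]
      rw [enorm_eq_nnnorm, hnnnorm, ← ENNReal.coe_rpow_of_nonneg _ hpos.le, ← NNReal.rpow_mul,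
        one_div_mul_cancel hpos.ne', NNReal.rpow_one]
    simp only [henorm]
    exact hg_int.trans ENNReal.one_lt_top
  refine ⟨hφ.toLp φ, ?_⟩
  filter_upwards [hφ.coeFn_toLp] with x hx
  rw [hx]
  exact Complex.ofReal_ne_zero.2 (NNReal.coe_ne_zero.2 (NNReal.rpow_pos (hg_pos x)).ne')

variable [Fact (1 ≤ p)]

/-- The multiplication operators on `L^p(ν)`, as a linear map. -/
def mulLpₗ (p : ℝ≥0∞) [Fact (1 ≤ p)] (ν : Measure X) :
    boundedMeasurable X →ₗ[ℂ] (Lp ℂ p ν →L[ℂ] Lp ℂ p ν) :=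
  ((ContinuousLinearMap.mul ℂ ℂ).holderL ν ∞ p p).toLinearMap ∘ₗ toLpTop ν

theorem coeFn_mulLpₗ (f : boundedMeasurable X) (ξ : Lp ℂ p ν) :
    mulLpₗ p ν f ξ =ᵐ[ν] fun x => (f : X → ℂ) x * ξ x := by
  filter_upwards [(ContinuousLinearMap.mul ℂ ℂ).coeFn_holder (r := p) (toLpTop ν f) ξ,
    (memLp_top f ν).coeFn_toLp] with x hx hfx
  exact hx.trans (congrArg (· * ξ x) hfx)

/-- The representation `f ↦ M_f` of the algebra `ℒ^∞` on `L^p(ν)` by multiplication operators. -/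
def mulLp (p : ℝ≥0∞) [Fact (1 ≤ p)] (ν : Measure X) :
    boundedMeasurable X →ₐ[ℂ] (Lp ℂ p ν →L[ℂ] Lp ℂ p ν) :=
  AlgHom.ofLinearMap (mulLpₗ p ν)
    (by
      ext1 ξ
      refine Lp.ext ((coeFn_mulLpₗ 1 ξ).trans ?_)
      simp)
    (fun f g => by
      ext1 ξ
      refine Lp.ext ((coeFn_mulLpₗ (f * g) ξ).trans ?_)
      filter_upwards [coeFn_mulLpₗ f (mulLpₗ p ν g ξ), coeFn_mulLpₗ g ξ] with x hf hg
      simp [hf, hg, mul_assoc])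

theorem coeFn_mulLp (f : boundedMeasurable X) (ξ : Lp ℂ p ν) :
    mulLp p ν f ξ =ᵐ[ν] fun x => (f : X → ℂ) x * ξ x :=
  coeFn_mulLpₗ f ξ

theorem eq_mulLp_iff {A : Lp ℂ p ν →L[ℂ] Lp ℂ p ν} {f : boundedMeasurable X} :
    A = mulLp p ν f ↔ ∀ ξ : Lp ℂ p ν, A ξ =ᵐ[ν] fun x => (f : X → ℂ) x * ξ x := by
  refine ⟨?_, fun h => ?_⟩
  · rintro rfl
    exact coeFn_mulLp f
  · ext1 ξ
    exact Lp.ext ((h ξ).trans (coeFn_mulLp f ξ).symm)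

theorem tendsto_mulLp_apply (hp : p ≠ ∞) {f : ℕ → boundedMeasurable X} {g : boundedMeasurable X}
    {C : ℝ} (hC : ∀ n x, ‖(f n : X → ℂ) x‖ ≤ C)
    (hlim : ∀ x, Tendsto (fun n => (f n : X → ℂ) x) atTop (𝓝 ((g : X → ℂ) x))) (ξ : Lp ℂ p ν) :
    Tendsto (fun n => mulLp p ν (f n) ξ) atTop (𝓝 (mulLp p ν g ξ)) := by
  have hg (x : X) : ‖(g : X → ℂ) x‖ ≤ C := le_of_tendsto (hlim x).norm (.of_forall fun n => hC n x)
  have hsub (n : ℕ) : ⇑(mulLp p ν (f n) ξ) - ⇑(mulLp p ν g ξ) =ᵐ[ν]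
      fun x => ((f n : X → ℂ) x - (g : X → ℂ) x) * ξ x := by
    filter_upwards [coeFn_mulLp (f n) ξ, coeFn_mulLp g ξ] with x hfx hgx
    rw [Pi.sub_apply, hfx, hgx, sub_mul]
  rw [Lp.tendsto_Lp_iff_tendsto_eLpNorm']
  simp only [eLpNorm_congr_ae (hsub _)]
  refine tendsto_eLpNorm_zero_of_dominated (zero_lt_one.trans_le Fact.out).ne' hp
    (bound := fun x => (C + C) * ‖ξ x‖) (fun n => ?_) ((Lp.memLp ξ).norm.const_mul _)
    (fun n => .of_forall fun x => ?_) (.of_forall fun x => ?_)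
  · exact ((f n).2.1.sub g.2.1).aestronglyMeasurable.mul (Lp.aestronglyMeasurable ξ)
  · rw [norm_mul]
    exact mul_le_mul_of_nonneg_right (norm_sub_le_of_le (hC n x) (hg x)) (norm_nonneg _)
  · simpa using ((hlim x).sub_const ((g : X → ℂ) x)).mul_const (ξ x)

/-- The algebra of bounded measurable functions whose multiplication operator commutes with `A`:
the domain to which the functional monotone class theorem is applied. -/
def mulLpCommutant (A : Lp ℂ p ν →L[ℂ] Lp ℂ p ν) : Subalgebra ℂ (boundedMeasurable X) :=
  (Subalgebra.centralizer ℂ {A}).comap (mulLp p ν)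

theorem mem_mulLpCommutant {A : Lp ℂ p ν →L[ℂ] Lp ℂ p ν} {f : boundedMeasurable X} :
    f ∈ mulLpCommutant A ↔ Commute A (mulLp p ν f) := by
  simp [mulLpCommutant, Subalgebra.mem_centralizer_iff, commute_iff_eq]

theorem isBddPointwiseClosed_mulLpCommutant (hp : p ≠ ∞) (A : Lp ℂ p ν →L[ℂ] Lp ℂ p ν) :
    IsBddPointwiseClosed (mulLpCommutant A : Set (boundedMeasurable X)) := by
  intro f g C hf hC hlim
  refine mem_mulLpCommutant.2 (ContinuousLinearMap.ext fun ξ => ?_)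
  have hleft := (A.continuous.tendsto _).comp (tendsto_mulLp_apply hp hC hlim ξ)
  refine tendsto_nhds_unique hleft ((tendsto_mulLp_apply hp hC hlim (A ξ)).congr fun n => ?_)
  exact (DFunLike.congr_fun (mem_mulLpCommutant.1 (hf n)) ξ).symm

theorem commute_mulLp_of_separatesPoints [TopologicalSpace X] [CompactSpace X] [BorelSpace X]
    [HasOuterApproxClosed X] (hp : p ≠ ∞) {G : Set C(X, ℂ)}
    (hsep : ((fun f : C(X, ℂ) => (f : X → ℂ)) '' G).SeparatesPoints)
    (hstar : ∀ g ∈ G, star g ∈ G) {A : Lp ℂ p ν →L[ℂ] Lp ℂ p ν}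
    (hA : ∀ g ∈ G, Commute A (mulLp p ν (ofContinuousMap g))) (f : boundedMeasurable X) :
    Commute A (mulLp p ν f) := by
  have htop := (isBddPointwiseClosed_mulLpCommutant hp A).eq_top_of_separatesPoints hsep hstar
    fun g hg => mem_mulLpCommutant.2 (hA g hg)
  exact mem_mulLpCommutant.1 (htop ▸ Algebra.mem_top)

theorem exists_mulLp_apply_eq {ξ ζ : Lp ℂ p ν} {C : ℝ} (hC : ∀ᵐ x ∂ν, ‖ξ x‖ ≤ C * ‖ζ x‖) :
    ∃ f : boundedMeasurable X, mulLp p ν f ζ = ξ := by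
  let quot : X → ℂ := fun x => ξ x / ζ x
  have hquot : Measurable quot :=
    (Lp.stronglyMeasurable ξ).measurable.div (Lp.stronglyMeasurable ζ).measurable
  have hmeas : MeasurableSet {x | ‖quot x‖ ≤ C} := measurableSet_le hquot.norm measurable_const
  let f : boundedMeasurable X := ⟨{x | ‖quot x‖ ≤ C}.indicator quot, hquot.indicator hmeas, |C|,
    fun x => by
      by_cases hx : ‖quot x‖ ≤ C
      · simpa [hx] using hx.trans (le_abs_self C)
      · simp [hx]⟩
  refine ⟨f, Lp.ext ?_⟩
  filter_upwards [coeFn_mulLp f ζ, hC] with x hfx hx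
  rw [hfx]
  by_cases hζ : ζ x = 0
  · have hξ : ξ x = 0 := by simpa [hζ] using hx
    rw [hζ, hξ, mul_zero]
  · have hle : x ∈ {x | ‖quot x‖ ≤ C} := by
      rwa [Set.mem_ofPred_eq, norm_div, div_le_iff₀ (norm_pos_iff.2 hζ)]
    have hval : (f : X → ℂ) x = ξ x / ζ x := Set.indicator_of_mem hle quot
    rw [hval, div_mul_cancel₀ _ hζ]

theorem ae_norm_apply_le_of_commute_mulLp [SigmaFinite ν] (hp : p ≠ ∞)
    {A : Lp ℂ p ν →L[ℂ] Lp ℂ p ν} (hA : ∀ f, Commute A (mulLp p ν f)) (ξ : Lp ℂ p ν) :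
    ∀ᵐ x ∂ν, ‖A ξ x‖ ≤ ‖A‖ * ‖ξ x‖ := by
  have hp₀ : p ≠ 0 := (zero_lt_one.trans_le Fact.out).ne'
  have hrestrict {s : Set X} (hs : MeasurableSet s) (η : Lp ℂ p ν) :
      eLpNorm η p (ν.restrict s) = ‖mulLp p ν (indicator hs) η‖ₑ := by
    rw [Lp.enorm_def, ← eLpNorm_indicator_eq_eLpNorm_restrict hs]
    refine eLpNorm_congr_ae ?_
    filter_upwards [coeFn_mulLp (indicator hs) η] with x hx
    by_cases hxs : x ∈ s <;> simp [hx, hxs]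
  have hle (s : Set X) (hs : MeasurableSet s) :
      eLpNorm (A ξ) p (ν.restrict s) ≤ eLpNorm (‖A‖ • ⇑ξ) p (ν.restrict s) := by
    have hcomm : mulLp p ν (indicator hs) (A ξ) = A (mulLp p ν (indicator hs) ξ) :=
      (DFunLike.congr_fun (hA (indicator hs)) ξ).symm
    rw [eLpNorm_const_smul, hrestrict hs, hrestrict hs, hcomm, enorm_norm]
    exact A.le_opENorm _
  filter_upwards [ae_norm_le_of_forall_eLpNorm_restrict_le hp₀ hp (Lp.aestronglyMeasurable _) hle]
    with x hx
  simpa using hx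

theorem eq_of_commute_mulLp_of_apply_eq {A B : Lp ℂ p ν →L[ℂ] Lp ℂ p ν}
    (hA : ∀ f, Commute A (mulLp p ν f)) (hB : ∀ f, Commute B (mulLp p ν f)) {φ : Lp ℂ p ν}
    (hφ : ∀ᵐ x ∂ν, φ x ≠ 0) (hAB : A φ = B φ) : A = B := by
  ext1 ξ
  have hA_apply (f : boundedMeasurable X) (η : Lp ℂ p ν) : A (mulLp p ν f η) = mulLp p ν f (A η) :=
    DFunLike.congr_fun (hA f) η
  have hB_apply (f : boundedMeasurable X) (η : Lp ℂ p ν) : B (mulLp p ν f η) = mulLp p ν f (B η) :=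
    DFunLike.congr_fun (hB f) η
  -- Both `ξ` and `φ` are bounded multiples of `ζ = |ξ| + |φ|`, so it suffices to compare at `ζ`.
  have hζ_mem : MemLp (fun x => ((‖ξ x‖ + ‖φ x‖ : ℝ) : ℂ)) p ν :=
    ((Lp.memLp ξ).norm.add (Lp.memLp φ).norm).ofReal
  let ζ := hζ_mem.toLp
  have hζ : ∀ᵐ x ∂ν, ‖ζ x‖ = ‖ξ x‖ + ‖φ x‖ := by
    filter_upwards [hζ_mem.coeFn_toLp] with x hx
    rw [hx, Complex.norm_real, Real.norm_of_nonneg (by positivity)]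
  obtain ⟨f, hf⟩ : ∃ f, mulLp p ν f ζ = ξ := exists_mulLp_apply_eq (C := 1) <| by
    filter_upwards [hζ] with x hx
    simp [hx]
  obtain ⟨h, hh⟩ : ∃ h, mulLp p ν h ζ = φ := exists_mulLp_apply_eq (C := 1) <| by
    filter_upwards [hζ] with x hx
    simp [hx]
  have hζ_eq : A ζ = B ζ := by
    have hmul : mulLp p ν h (A ζ) = mulLp p ν h (B ζ) := by
      rw [← hA_apply, ← hB_apply, hh, hAB]
    refine Lp.ext ?_
    filter_upwards [coeFn_mulLp h (A ζ), coeFn_mulLp h (B ζ), coeFn_mulLp h ζ, hφ]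
      with x hAx hBx hζx hφx
    rw [hmul, hBx] at hAx
    rw [hh] at hζx
    exact (mul_left_cancel₀ (left_ne_zero_of_mul (hζx ▸ hφx)) hAx).symm
  rw [← hf, hA_apply, hB_apply, hζ_eq]

theorem commute_mulLp_mulLp (f g : boundedMeasurable X) : Commute (mulLp p ν f) (mulLp p ν g) :=
  (Commute.all f g).map (mulLp p ν)

theorem forall_commute_mulLp_iff [SigmaFinite ν] (hp : p ≠ ∞) {A : Lp ℂ p ν →L[ℂ] Lp ℂ p ν} :
    (∀ f, Commute A (mulLp p ν f)) ↔ A ∈ Set.range (mulLp p ν) := by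
  refine ⟨fun hA => ?_, ?_⟩
  · obtain ⟨φ, hφ⟩ := exists_Lp_ae_ne_zero (ν := ν) (zero_lt_one.trans_le Fact.out).ne' hp
    obtain ⟨g, hg⟩ := exists_mulLp_apply_eq (ae_norm_apply_le_of_commute_mulLp hp hA φ)
    exact ⟨g, eq_of_commute_mulLp_of_apply_eq (commute_mulLp_mulLp g) hA hφ hg⟩
  · rintro ⟨g, rfl⟩
    exact commute_mulLp_mulLp g

theorem mulLp_eq_iff [SigmaFinite ν] (hp : p ≠ ∞) {f g : boundedMeasurable X} :
    mulLp p ν f = mulLp p ν g ↔ (f : X → ℂ) =ᵐ[ν] g := by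
  refine ⟨fun h => ?_, fun h => eq_mulLp_iff.2 fun ξ => ?_⟩
  · obtain ⟨φ, hφ⟩ := exists_Lp_ae_ne_zero (ν := ν) (zero_lt_one.trans_le Fact.out).ne' hp
    filter_upwards [coeFn_mulLp f φ, coeFn_mulLp g φ, hφ] with x hfx hgx hφx
    rw [h, hgx] at hfx
    exact (mul_right_cancel₀ hφx hfx).symm
  · filter_upwards [coeFn_mulLp f ξ, h] with x hfx hx
    rw [hfx, hx]

theorem exists_mulLp_eq_smul_one_iff [SigmaFinite ν] (hp : p ≠ ∞) {f : boundedMeasurable X} :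
    (∃ c : ℂ, mulLp p ν f = c • (1 : Lp ℂ p ν →L[ℂ] Lp ℂ p ν)) ↔
      ∃ c : ℂ, (f : X → ℂ) =ᵐ[ν] Function.const X c := by
  refine exists_congr fun c => ?_
  rw [← Algebra.algebraMap_eq_smul_one, ← (mulLp p ν).commutes, mulLp_eq_iff hp]
  rfl

end MultiplicationOperators

section UnitaryOperators

variable {X : Type*} [MeasurableSpace X] {ν : Measure X}

open boundedMeasurable

theorem star_mulLp_two (f : boundedMeasurable X) : star (mulLp 2 ν f) = mulLp 2 ν (star f) := by
  refine ((ContinuousLinearMap.eq_adjoint_iff _ _).2 fun ξ η => ?_).symm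
  rw [L2.inner_def, L2.inner_def]
  refine integral_congr_ae ?_
  filter_upwards [coeFn_mulLp (star f) ξ, coeFn_mulLp f η] with x hξ hη
  simp [hξ, hη, mul_assoc, mul_comm]

/-- The ⋆-representation `f ↦ M_f` of `ℒ^∞` on `L²(ν)`. -/
def mulL2 (ν : Measure X) : boundedMeasurable X →⋆ₐ[ℂ] (Lp ℂ 2 ν →L[ℂ] Lp ℂ 2 ν) :=
  { mulLp 2 ν with map_star' := fun f => (star_mulLp_two f).symm }

/-- Unimodular continuous functions as unitary elements of `ℒ^∞`. -/
def unitaryOfCircle [TopologicalSpace X] [CompactSpace X] [OpensMeasurableSpace X] :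
    C(X, Circle) →* unitary (boundedMeasurable X) where
  toFun c := ⟨ofContinuousMap ⟨fun x => (c x : ℂ), by fun_prop⟩, by
    constructor <;> ext x <;> simp [← Circle.coe_inv_eq_conj]⟩
  map_one' := by ext; simp
  map_mul' c d := by ext; simp

/-- Multiplication by unimodular continuous functions, as unitary operators of `L²(ν)`. -/
def mulCircle [TopologicalSpace X] [CompactSpace X] [OpensMeasurableSpace X] (ν : Measure X) :
    C(X, Circle) →* unitary (Lp ℂ 2 ν →L[ℂ] Lp ℂ 2 ν) :=
  (Unitary.map (StarMonoidHom.ofClass (mulL2 ν))).toMonoidHom.comp unitaryOfCircle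

theorem coe_mulCircle [TopologicalSpace X] [CompactSpace X] [OpensMeasurableSpace X]
    (c : C(X, Circle)) :
    (mulCircle ν c : Lp ℂ 2 ν →L[ℂ] Lp ℂ 2 ν) = mulLp 2 ν (unitaryOfCircle c) := rfl

end UnitaryOperators

section WeightedComposition

variable {X : Type*} [MeasurableSpace X] {ν : Measure X} {e : X ≃ᵐ X} {w : X → ℂ}

open boundedMeasurable

/-- `w` is a weight making `ξ ↦ w · (ξ ∘ e)` a unitary operator of `L²(ν)`: its square modulus is
the Radon–Nikodym derivative of `ν ∘ e` (encoded as the image of `ν` under `e⁻¹`), and it vanishes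
only on a null set, so that `ν ∘ e` and `ν` are equivalent. -/
structure IsUnitaryWeight (e : X ≃ᵐ X) (ν : Measure X) (w : X → ℂ) : Prop where
  measurable : Measurable w
  map_symm_eq : ν.map e.symm = ν.withDensity fun x => ‖w x‖ₑ ^ (2 : ℝ)
  ae_ne_zero : ∀ᵐ x ∂ν, w x ≠ 0

namespace IsUnitaryWeight

theorem quasiMeasurePreserving (hw : IsUnitaryWeight e ν w) :
    Measure.QuasiMeasurePreserving e ν ν := by
  refine ⟨e.measurable, ?_⟩
  have hac : ν ≪ ν.map e.symm := by
    rw [hw.map_symm_eq]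
    refine withDensity_absolutelyContinuous' (hw.measurable.enorm.pow_const _).aemeasurable ?_
    filter_upwards [hw.ae_ne_zero] with x hx
    simpa using hx
  simpa [Measure.map_map e.measurable e.symm.measurable] using hac.map e.measurable

theorem eLpNorm_mul_comp (hw : IsUnitaryWeight e ν w) {g : X → ℂ} (hg : Measurable g) :
    eLpNorm (fun x => w x * g (e x)) 2 ν = eLpNorm g 2 ν := by
  have hlintegral : ∫⁻ x, ‖w x * g (e x)‖ₑ ^ (2 : ℝ) ∂ν = ∫⁻ x, ‖g x‖ₑ ^ (2 : ℝ) ∂ν :=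
    calc ∫⁻ x, ‖w x * g (e x)‖ₑ ^ (2 : ℝ) ∂ν
        = ∫⁻ x, ‖w x‖ₑ ^ (2 : ℝ) * ‖g (e x)‖ₑ ^ (2 : ℝ) ∂ν := by
          simp only [enorm_mul, ENNReal.mul_rpow_of_nonneg _ _ zero_le_two]
      _ = ∫⁻ x, ‖g (e x)‖ₑ ^ (2 : ℝ) ∂ν.map e.symm := by
          rw [hw.map_symm_eq]
          exact (lintegral_withDensity_eq_lintegral_mul ν (hw.measurable.enorm.pow_const _)
            ((hg.comp e.measurable).enorm.pow_const _)).symm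
      _ = ∫⁻ x, ‖g x‖ₑ ^ (2 : ℝ) ∂ν := by
          simp only [lintegral_map_equiv, e.apply_symm_apply]
  rw [eLpNorm_eq_lintegral_rpow_enorm_toReal two_ne_zero ENNReal.ofNat_ne_top,
    eLpNorm_eq_lintegral_rpow_enorm_toReal two_ne_zero ENNReal.ofNat_ne_top,
    ENNReal.toReal_ofNat, hlintegral]

theorem memLp_mul_comp (hw : IsUnitaryWeight e ν w) (ξ : Lp ℂ 2 ν) :
    MemLp (fun x => w x * ξ (e x)) 2 ν := by
  have hξ := (Lp.stronglyMeasurable ξ).measurable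
  refine ⟨(hw.measurable.mul (hξ.comp e.measurable)).aestronglyMeasurable, ?_⟩
  rw [hw.eLpNorm_mul_comp hξ]
  exact Lp.eLpNorm_lt_top ξ

/-- The isometry `ξ ↦ w · (ξ ∘ e)` of `L²(ν)`. -/
def weightedCompₗᵢ (hw : IsUnitaryWeight e ν w) : Lp ℂ 2 ν →ₗᵢ[ℂ] Lp ℂ 2 ν where
  toFun ξ := (hw.memLp_mul_comp ξ).toLp
  map_add' ξ η := by
    rw [← MemLp.toLp_add, MemLp.toLp_eq_toLp_iff]
    filter_upwards [hw.quasiMeasurePreserving.ae (Lp.coeFn_add ξ η)] with x hx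
    simp only [Pi.add_apply, hx, mul_add]
  map_smul' c ξ := by
    rw [RingHom.id_apply, ← MemLp.toLp_const_smul, MemLp.toLp_eq_toLp_iff]
    filter_upwards [hw.quasiMeasurePreserving.ae (Lp.coeFn_smul c ξ)] with x hx
    simp only [Pi.smul_apply, hx, smul_eq_mul, mul_left_comm]
  norm_map' ξ := by
    simp only [LinearMap.coe_mk, AddHom.coe_mk]
    rw [Lp.norm_toLp, hw.eLpNorm_mul_comp (Lp.stronglyMeasurable ξ).measurable, Lp.norm_def]

theorem coeFn_weightedCompₗᵢ (hw : IsUnitaryWeight e ν w) (ξ : Lp ℂ 2 ν) :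
    hw.weightedCompₗᵢ ξ =ᵐ[ν] fun x => w x * ξ (e x) :=
  (hw.memLp_mul_comp ξ).coeFn_toLp

theorem weightedCompₗᵢ_surjective (hw : IsUnitaryWeight e ν w) :
    Function.Surjective hw.weightedCompₗᵢ := by
  intro η
  let g : X → ℂ := (fun x => η x / w x) ∘ e.symm
  have hg_meas : Measurable g :=
    ((Lp.stronglyMeasurable η).measurable.div hw.measurable).comp e.symm.measurable
  have hg : (fun x => w x * g (e x)) =ᵐ[ν] η := by
    filter_upwards [hw.ae_ne_zero] with x hx
    simp [g, mul_div_cancel₀ _ hx]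
  have hg_mem : MemLp g 2 ν := by
    refine ⟨hg_meas.aestronglyMeasurable, ?_⟩
    rw [← hw.eLpNorm_mul_comp hg_meas, eLpNorm_congr_ae hg]
    exact Lp.eLpNorm_lt_top η
  refine ⟨hg_mem.toLp g, Lp.ext ?_⟩
  filter_upwards [hw.coeFn_weightedCompₗᵢ (hg_mem.toLp g),
    hw.quasiMeasurePreserving.ae hg_mem.coeFn_toLp, hg] with x hx hgx hηx
  rw [hx, hgx, hηx]

/-- The unitary operator `ξ ↦ w · (ξ ∘ e)` of `L²(ν)`. -/
def weightedComp (hw : IsUnitaryWeight e ν w) : unitary (Lp ℂ 2 ν →L[ℂ] Lp ℂ 2 ν) :=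
  Unitary.linearIsometryEquiv.symm
    (.ofSurjective hw.weightedCompₗᵢ hw.weightedCompₗᵢ_surjective)

theorem coeFn_weightedComp (hw : IsUnitaryWeight e ν w) (ξ : Lp ℂ 2 ν) :
    (hw.weightedComp : Lp ℂ 2 ν →L[ℂ] Lp ℂ 2 ν) ξ =ᵐ[ν] fun x => w x * ξ (e x) :=
  hw.coeFn_weightedCompₗᵢ ξ

theorem semiconjBy_weightedComp (hw : IsUnitaryWeight e ν w) (f : boundedMeasurable X) :
    SemiconjBy (hw.weightedComp : Lp ℂ 2 ν →L[ℂ] Lp ℂ 2 ν) (mulLp 2 ν f)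
      (mulLp 2 ν (comp f e.measurable)) := by
  ext1 ξ
  refine Lp.ext ?_
  filter_upwards [hw.coeFn_weightedComp (mulLp 2 ν f ξ),
    hw.quasiMeasurePreserving.ae (coeFn_mulLp f ξ), hw.coeFn_weightedComp ξ,
    coeFn_mulLp (comp f e.measurable)
      ((hw.weightedComp : Lp ℂ 2 ν →L[ℂ] Lp ℂ 2 ν) ξ)] with x hWf hf hW hfW
  simp only [mul_apply_eq_comp, hWf, hf, hfW, hW, coe_comp, Function.comp_apply,
    mul_left_comm]

theorem semiconjBy_weightedComp_inv (hw : IsUnitaryWeight e ν w) (f : boundedMeasurable X) :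
    SemiconjBy ((hw.weightedComp⁻¹ : unitary _) : Lp ℂ 2 ν →L[ℂ] Lp ℂ 2 ν) (mulLp 2 ν f)
      (mulLp 2 ν (comp f e.symm.measurable)) := by
  have hcomp : comp (comp f e.symm.measurable) e.measurable = f := by
    ext x
    simp
  have hsemi := hw.semiconjBy_weightedComp (comp f e.symm.measurable)
  rw [hcomp] at hsemi
  exact SemiconjBy.units_inv_symm_left (a := Unitary.toUnits hw.weightedComp) hsemi

theorem commute_mulLp_weightedComp_iff [SigmaFinite ν] (hw : IsUnitaryWeight e ν w)
    {f : boundedMeasurable X} :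
    Commute (mulLp 2 ν f) (hw.weightedComp : Lp ℂ 2 ν →L[ℂ] Lp ℂ 2 ν) ↔
      (f : X → ℂ) ∘ e =ᵐ[ν] f := by
  rw [commute_iff_eq, (hw.semiconjBy_weightedComp f).eq, Unitary.mul_left_inj, eq_comm,
    mulLp_eq_iff (p := 2) ENNReal.ofNat_ne_top, coe_comp]

end IsUnitaryWeight

end WeightedComposition

section Ergodicity

variable {X : Type*} [MeasurableSpace X] {ν : Measure X} {S : X → X}

open boundedMeasurable

theorem quasiErgodic_iff_forall_measure_eq_zero (hS : Measure.QuasiMeasurePreserving S ν ν) :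
    QuasiErgodic S ν ↔
      ∀ E : Set X, MeasurableSet E → S ⁻¹' E = E → ν E = 0 ∨ ν Eᶜ = 0 := by
  have hconst (E : Set X) : EventuallyConst E (ae ν) ↔ ν E = 0 ∨ ν Eᶜ = 0 := by
    rw [eventuallyConst_set', ae_eq_empty, ae_eq_univ]
  simp only [← hconst]
  exact ⟨fun h _ hE hinv => h.aeconst_set hE hinv, fun h => { hS with aeconst_set := h }⟩

theorem quasiErgodic_iff_forall_ae_eq_const (hS : Measure.QuasiMeasurePreserving S ν ν) :
    QuasiErgodic S ν ↔ ∀ f : boundedMeasurable X, (f : X → ℂ) ∘ S =ᵐ[ν] f →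
      ∃ c : ℂ, (f : X → ℂ) =ᵐ[ν] Function.const X c := by
  refine ⟨fun h f hf => h.ae_eq_const_of_ae_eq_comp_ae f.2.1.aestronglyMeasurable hf,
    fun h => (quasiErgodic_iff_forall_measure_eq_zero hS).2 fun E hE hinv => ?_⟩
  have hcomp : (indicator hE : X → ℂ) ∘ S = indicator hE := by
    funext x
    rw [coe_indicator, Function.comp_apply, ← Set.indicator_comp_right, hinv, Pi.one_comp]
  obtain ⟨c, hc⟩ := h (indicator hE) (.of_eq hcomp)
  obtain rfl | hc₀ := eq_or_ne c 0
  · refine .inl (measure_mono_null (fun x hx => ?_) hc)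
    simp [hx]
  · refine .inr (measure_mono_null (fun x hx => ?_) hc)
    simp [Set.notMem_of_mem_compl hx, hc₀.symm]

end Ergodicity

section SolenoidShift

variable {N : ℕ}

theorem measurable_val_apply (n : ℤ) : Measurable fun z : Solenoid N => z.val n :=
  (measurable_pi_apply n).comp measurable_subtype_coe

theorem measurable_shift : Measurable (shift N) :=
  Measurable.subtype_mk (measurable_pi_iff.2 fun n => measurable_val_apply (n - 1))

theorem measurable_shiftInv : Measurable (shiftInv N) :=
  Measurable.subtype_mk (measurable_pi_iff.2 fun n => measurable_val_apply (n + 1))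

/-- The shift, as an automorphism of the measurable space `S_N`. -/
def shiftEquiv (N : ℕ) : Solenoid N ≃ᵐ Solenoid N where
  toFun := shift N
  invFun := shiftInv N
  left_inv z := by ext n; simp [shift, shiftInv]
  right_inv z := by ext n; simp [shift, shiftInv]
  measurable_toFun := measurable_shift
  measurable_invFun := measurable_shiftInv

theorem measurable_shiftZ (n : ℤ) : Measurable (shiftZ N n) := by
  unfold shiftZ
  split_ifs
  · exact measurable_shift.iterate _
  · exact measurable_shiftInv.iterate _

theorem shift_iterate_val (k : ℕ) (z : Solenoid N) (m : ℤ) :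
    ((shift N)^[k] z).val m = z.val (m - k) := by
  induction k generalizing z with
  | zero => simp
  | succ k ih => simp [ih, shift, sub_sub]

theorem shiftInv_iterate_val (k : ℕ) (z : Solenoid N) (m : ℤ) :
    ((shiftInv N)^[k] z).val m = z.val (m + k) := by
  induction k generalizing z with
  | zero => simp
  | succ k ih => simp [ih, shiftInv, add_assoc]

theorem shiftZ_val (n : ℤ) (z : Solenoid N) (m : ℤ) : (shiftZ N n z).val m = z.val (m - n) := by
  unfold shiftZ
  split_ifs with hn
  · rw [shift_iterate_val, Int.toNat_of_nonneg hn]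
  · rw [shiftInv_iterate_val, Int.toNat_of_nonneg (by lia), sub_eq_add_neg]

theorem shiftZ_zero (z : Solenoid N) : shiftZ N 0 z = z := by
  ext m
  rw [shiftZ_val, sub_zero]

theorem shift_shiftZ (n : ℤ) (z : Solenoid N) : shift N (shiftZ N n z) = shiftZ N (n + 1) z := by
  ext m
  simp [shift, shiftZ_val, sub_sub, add_comm]

theorem shiftInv_shiftZ (n : ℤ) (z : Solenoid N) :
    shiftInv N (shiftZ N n z) = shiftZ N (n - 1) z := by
  ext m
  simp [shiftInv, shiftZ_val, sub_sub_eq_add_sub]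

instance : CompactSpace (Solenoid N) := by
  have hclosed : IsClosed {z : ℤ → Circle | ∀ n, z (n + 1) ^ N = z n} := by
    simp only [Set.ofPred_forall]
    exact isClosed_iInter fun n => isClosed_eq (by fun_prop) (by fun_prop)
  exact isCompact_iff_compactSpace.1 hclosed.isCompact

instance : TopologicalSpace.PseudoMetrizableSpace (Solenoid N) :=
  IsInducing.subtypeVal.pseudoMetrizableSpace

/-- The coordinate `z ↦ z_n`. Its powers `z ↦ z_n ^ k` are the characters `χ_{k/Nⁿ}` of `S_N`. -/
def coord (N : ℕ) (n : ℤ) : C(Solenoid N, Circle) :=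
  ⟨fun z => z.val n, (continuous_apply n).comp continuous_subtype_val⟩

theorem coord_add_one_pow (n : ℤ) : coord N (n + 1) ^ N = coord N n := by
  ext1 z
  exact z.property n

end SolenoidShift

section BaumslagSolitarRepresentation

variable {N : ℕ} {ν : Measure (Solenoid N)} {w : Solenoid N → ℂ}

open boundedMeasurable

theorem isUnitaryWeight_sqrt_rnDeriv [SigmaFinite ν] (hqi : QuasiInvariant N ν)
    {θ : Solenoid N → Circle} (hθ : Measurable θ) :
    IsUnitaryWeight (shiftEquiv N) ν
      (fun z => √((measShift N ν).rnDeriv ν z).toReal * (θ z : ℂ)) := by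
  have : SigmaFinite (measShift N ν) := (shiftEquiv N).symm.sigmaFinite_map
  have hsq : ∀ᵐ z ∂ν, ‖(√((measShift N ν).rnDeriv ν z).toReal * (θ z : ℂ) : ℂ)‖ₑ ^ (2 : ℝ) =
      (measShift N ν).rnDeriv ν z := by
    filter_upwards [(measShift N ν).rnDeriv_lt_top ν] with z hz
    rw [← ofReal_norm, norm_mul, Circle.norm_coe, mul_one, Complex.norm_real,
      Real.norm_of_nonneg (Real.sqrt_nonneg _), ENNReal.rpow_two,
      ← ENNReal.ofReal_pow (Real.sqrt_nonneg _), Real.sq_sqrt ENNReal.toReal_nonneg,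
      ENNReal.ofReal_toReal hz.ne]
  refine ⟨?_, ?_, ?_⟩
  · have hcoe : Continuous fun c : Circle => (c : ℂ) := by fun_prop
    have hθ_coe : Measurable fun z => (θ z : ℂ) := hcoe.measurable.comp hθ
    fun_prop
  · rw [withDensity_congr_ae hsq, Measure.withDensity_rnDeriv_eq _ _ hqi.1]
    rfl
  · filter_upwards [hsq, Measure.rnDeriv_pos' hqi.2] with z hz hpos hzero
    simp [hzero, hpos.ne] at hz

theorem semiconjBy_weightedComp_zpow (hw : IsUnitaryWeight (shiftEquiv N) ν w) (n : ℤ)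
    (f : boundedMeasurable (Solenoid N)) :
    SemiconjBy ((hw.weightedComp ^ n : unitary _) : Lp ℂ 2 ν →L[ℂ] Lp ℂ 2 ν) (mulLp 2 ν f)
      (mulLp 2 ν (comp f (measurable_shiftZ n))) := by
  induction n using Int.induction_on generalizing f with
  | zero =>
    have hcomp : comp f (measurable_shiftZ 0) = f := by
      ext z
      simp [shiftZ_zero]
    simp [hcomp]
  | succ n ih =>
    have hcomp : comp (comp f (shiftEquiv N).measurable) (measurable_shiftZ n) =
        comp f (measurable_shiftZ (n + 1)) := by
      ext z
      exact congrArg f.1 (shift_shiftZ _ z)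
    rw [zpow_add_one, ← hcomp]
    exact (ih _).mul_left (hw.semiconjBy_weightedComp f)
  | pred n ih =>
    have hcomp : comp (comp f (shiftEquiv N).symm.measurable) (measurable_shiftZ (-n)) =
        comp f (measurable_shiftZ (-n - 1)) := by
      ext z
      exact congrArg f.1 (shiftInv_shiftZ _ z)
    rw [zpow_sub_one, ← hcomp]
    exact (ih _).mul_left (hw.semiconjBy_weightedComp_inv f)

theorem weightedComp_zpow_mul_mulLp_mul_zpow_neg (hw : IsUnitaryWeight (shiftEquiv N) ν w)
    (n : ℤ) (f : boundedMeasurable (Solenoid N)) :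
    ((hw.weightedComp ^ n : unitary _) : Lp ℂ 2 ν →L[ℂ] Lp ℂ 2 ν) * mulLp 2 ν f *
        ((hw.weightedComp ^ (-n) : unitary _) : Lp ℂ 2 ν →L[ℂ] Lp ℂ 2 ν) =
      mulLp 2 ν (comp f (measurable_shiftZ n)) := by
  rw [(semiconjBy_weightedComp_zpow hw n f).eq, mul_assoc, ← Submonoid.coe_mul, ← zpow_add,
    add_neg_cancel, zpow_zero, OneMemClass.coe_one, mul_one]

theorem weightedComp_zpow_mul_mulCircle_coord_zpow (hw : IsUnitaryWeight (shiftEquiv N) ν w)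
    (n m k : ℤ) :
    hw.weightedComp ^ n * mulCircle ν (coord N m) ^ k * hw.weightedComp ^ (-n) =
      mulCircle ν (coord N (m - n) ^ k) := by
  refine Subtype.ext ?_
  rw [← map_zpow, Submonoid.coe_mul, Submonoid.coe_mul, coe_mulCircle,
    weightedComp_zpow_mul_mulLp_mul_zpow_neg, coe_mulCircle]
  congr 1
  ext z
  exact congrArg (fun c : Circle => ((c ^ k : Circle) : ℂ)) (shiftZ_val n z m)

theorem weightedComp_mul_mulCircle_coord_mul_inv (hw : IsUnitaryWeight (shiftEquiv N) ν w)
    (m : ℤ) :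
    hw.weightedComp * mulCircle ν (coord N m) * hw.weightedComp⁻¹ =
      mulCircle ν (coord N m) ^ N := by
  have hconj := weightedComp_zpow_mul_mulCircle_coord_zpow hw 1 m 1
  have hpow := coord_add_one_pow (N := N) (m - 1)
  rw [sub_add_cancel] at hpow
  rwa [zpow_one, zpow_one, zpow_neg_one, zpow_one, ← hpow, map_pow] at hconj

theorem forall_commute_mulCircle_coord_zpow_iff [SigmaFinite ν]
    {A : Lp ℂ 2 ν →L[ℂ] Lp ℂ 2 ν} :
    (∀ n k : ℤ, Commute A (mulCircle ν (coord N n ^ k) : Lp ℂ 2 ν →L[ℂ] Lp ℂ 2 ν)) ↔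
      A ∈ Set.range (mulLp 2 ν) := by
  rw [← forall_commute_mulLp_iff (p := 2) ENNReal.ofNat_ne_top]
  refine ⟨fun hA => ?_, fun hA n k => hA _⟩
  let toComplex (c : C(Solenoid N, Circle)) : C(Solenoid N, ℂ) := ⟨fun z => c z, by fun_prop⟩
  refine commute_mulLp_of_separatesPoints ENNReal.ofNat_ne_top
    (G := {g | ∃ n k : ℤ, g = toComplex (coord N n ^ k)}) ?_ ?_ ?_
  · intro y z hyz
    obtain ⟨n, hn⟩ := Function.ne_iff.1 (Subtype.coe_ne_coe.2 hyz)
    exact ⟨toComplex (coord N n ^ (1 : ℤ)), ⟨_, ⟨n, 1, rfl⟩, rfl⟩,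
      by simpa [toComplex, coord, Circle.ext_iff] using hn⟩
  · rintro _ ⟨n, k, rfl⟩
    refine ⟨n, -k, ?_⟩
    ext z
    simp [toComplex, ← Circle.coe_inv_eq_conj]
  · rintro _ ⟨n, k, rfl⟩
    exact hA n k

theorem forall_commute_weightedComp_zpow_mul_iff [SigmaFinite ν]
    (hw : IsUnitaryWeight (shiftEquiv N) ν w) {A : Lp ℂ 2 ν →L[ℂ] Lp ℂ 2 ν} :
    (∀ n k : ℤ, Commute A
      ((hw.weightedComp ^ n * mulCircle ν (coord N 0) ^ k * hw.weightedComp ^ (-n) : unitary _) :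
        Lp ℂ 2 ν →L[ℂ] Lp ℂ 2 ν)) ↔ A ∈ Set.range (mulLp 2 ν) := by
  simp only [weightedComp_zpow_mul_mulCircle_coord_zpow, zero_sub,
    ← forall_commute_mulCircle_coord_zpow_iff]
  exact (Equiv.neg ℤ).forall_congr fun _ => Iff.rfl

theorem mem_doubleCommutant_iff [SigmaFinite ν] (hw : IsUnitaryWeight (shiftEquiv N) ν w)
    {B : Lp ℂ 2 ν →L[ℂ] Lp ℂ 2 ν} :
    (∀ A : Lp ℂ 2 ν →L[ℂ] Lp ℂ 2 ν, (∀ n k : ℤ, Commute A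
      ((hw.weightedComp ^ n * mulCircle ν (coord N 0) ^ k * hw.weightedComp ^ (-n) : unitary _) :
        Lp ℂ 2 ν →L[ℂ] Lp ℂ 2 ν)) → Commute A B) ↔ B ∈ Set.range (mulLp 2 ν) := by
  simp only [forall_commute_weightedComp_zpow_mul_iff, Set.forall_mem_range]
  rw [← forall_commute_mulLp_iff (p := 2) ENNReal.ofNat_ne_top]
  exact forall_congr' fun f => ⟨Commute.symm, Commute.symm⟩

theorem commute_weightedComp_and_mulCircle_iff [SigmaFinite ν]
    (hw : IsUnitaryWeight (shiftEquiv N) ν w) {A : Lp ℂ 2 ν →L[ℂ] Lp ℂ 2 ν} :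
    (Commute A (hw.weightedComp : Lp ℂ 2 ν →L[ℂ] Lp ℂ 2 ν) ∧
        Commute A (mulCircle ν (coord N 0) : Lp ℂ 2 ν →L[ℂ] Lp ℂ 2 ν)) ↔
      ∃ f : boundedMeasurable (Solenoid N),
        (f : Solenoid N → ℂ) ∘ shift N =ᵐ[ν] f ∧ A = mulLp 2 ν f := by
  constructor
  · rintro ⟨hU, hT⟩
    have hzpow {V : unitary (Lp ℂ 2 ν →L[ℂ] Lp ℂ 2 ν)}
        (hV : Commute A (V : Lp ℂ 2 ν →L[ℂ] Lp ℂ 2 ν)) (n : ℤ) :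
        Commute A ((V ^ n : unitary _) : Lp ℂ 2 ν →L[ℂ] Lp ℂ 2 ν) := by
      have h := Commute.units_zpow_right (u := Unitary.toUnits V) hV n
      rwa [← map_zpow] at h
    obtain ⟨f, rfl⟩ := (forall_commute_weightedComp_zpow_mul_iff hw).1 fun n k =>
      ((hzpow hU n).mul_right (hzpow hT k)).mul_right (hzpow hU (-n))
    exact ⟨f, hw.commute_mulLp_weightedComp_iff.1 hU, rfl⟩
  · rintro ⟨f, hf, rfl⟩
    exact ⟨hw.commute_mulLp_weightedComp_iff.2 hf, commute_mulLp_mulLp f _⟩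

theorem irreducible_iff_shiftErgodic [SigmaFinite ν]
    (hw : IsUnitaryWeight (shiftEquiv N) ν w) :
    (∀ A : Lp ℂ 2 ν →L[ℂ] Lp ℂ 2 ν,
        Commute A (hw.weightedComp : Lp ℂ 2 ν →L[ℂ] Lp ℂ 2 ν) →
        Commute A (mulCircle ν (coord N 0) : Lp ℂ 2 ν →L[ℂ] Lp ℂ 2 ν) →
        ∃ c : ℂ, A = c • (1 : Lp ℂ 2 ν →L[ℂ] Lp ℂ 2 ν)) ↔
      ShiftErgodic N ν := by
  have hS : Measure.QuasiMeasurePreserving (shift N) ν ν := hw.quasiMeasurePreserving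
  rw [ShiftErgodic, ← quasiErgodic_iff_forall_measure_eq_zero hS,
    quasiErgodic_iff_forall_ae_eq_const hS]
  simp only [← and_imp, commute_weightedComp_and_mulCircle_iff]
  simp only [← exists_mulLp_eq_smul_one_iff (p := 2) ENNReal.ofNat_ne_top]
  constructor
  · exact fun h f hf => h _ ⟨f, hf, rfl⟩
  · rintro h _ ⟨f, hf, rfl⟩
    exact h f hf

end BaumslagSolitarRepresentation

end Development

open MeasureTheory Real Complex Filter Finset in
/-- Proposition 2.2. Given a σ-finite quasi-invariant measure `ν`
on the solenoid and a measurable `θ : S_N → 𝕋`, the operators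
`Uξ = √Δ·θ·(ξ∘S)` and `(Tξ)(z) = z₀ ξ(z)` on `L²(ν)` are unitary and satisfy
`U T U⁻¹ = T^N`, hence define a representation `π_{ν,θ}` of `BS(1,N)`; moreover
`Uⁿ M_f U⁻ⁿ = M_{f∘Sⁿ}`, `U⁻ⁿ T^k Uⁿ` is multiplication by the character `χ_{k/Nⁿ}`,
the von Neumann algebra generated by `{Uⁿ T^k U⁻ⁿ}` is `{M_f : f ∈ L^∞(ν)}`, the
commutant is `{M_f : f∘S = f ν-a.e.}`, and the representation is irreducible iff
`S` is ergodic w.r.t. `ν`. -/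
theorem statement_2 (N : ℕ) (hN : 2 ≤ N)
    (ν : Measure (Solenoid N)) [SigmaFinite ν] (hqi : QuasiInvariant N ν)
    (θ : Solenoid N → Circle) (hθ : Measurable θ) :
    ∃ U T : unitary (Lp ℂ 2 ν →L[ℂ] Lp ℂ 2 ν),
      -- (1) the operators are (well-defined) unitaries given by the formulas, and
      -- satisfy the Baumslag–Solitar relation
      IsPiNuTheta N ν θ U T ∧
      U * T * U⁻¹ = T ^ N ∧
      -- (2a) `Uⁿ M_f U⁻ⁿ = M_{f ∘ Sⁿ}` for `f ∈ L^∞(ν)`, `n ∈ ℤ`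
      (∀ f : Solenoid N → ℂ, BddMeasurable f →
        ∀ A : Lp ℂ 2 ν →L[ℂ] Lp ℂ 2 ν,
          (∀ ξ : Lp ℂ 2 ν, (A ξ : Solenoid N → ℂ) =ᵐ[ν]
              fun z => f z * (ξ : Solenoid N → ℂ) z) →
          ∀ n : ℤ, ∀ ξ : Lp ℂ 2 ν,
            ((((U ^ n : unitary _) : Lp ℂ 2 ν →L[ℂ] Lp ℂ 2 ν) *
                A * ((U ^ (-n) : unitary _) : Lp ℂ 2 ν →L[ℂ] Lp ℂ 2 ν)) ξ
              : Solenoid N → ℂ) =ᵐ[ν]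
              fun z => f (shiftZ N n z) * (ξ : Solenoid N → ℂ) z) ∧
      -- (2b) `U⁻ⁿ T^k Uⁿ` is multiplication by the character `k/Nⁿ`,
      -- i.e. by `z ↦ (z_n)^k`
      (∀ n k : ℤ, ∀ ξ : Lp ℂ 2 ν,
        ((((U ^ (-n) * T ^ k * U ^ n : unitary _) :
            Lp ℂ 2 ν →L[ℂ] Lp ℂ 2 ν)) ξ : Solenoid N → ℂ) =ᵐ[ν]
          fun z => ((z.val n : Circle) : ℂ) ^ k * (ξ : Solenoid N → ℂ) z) ∧
      -- (2c) the von Neumann algebra generated by `{Uⁿ T^k U⁻ⁿ}` (its double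
      -- commutant) is exactly the algebra of multiplication operators `M_f`,
      -- `f ∈ L^∞(ν)`
      (∀ B : Lp ℂ 2 ν →L[ℂ] Lp ℂ 2 ν,
        (∀ A : Lp ℂ 2 ν →L[ℂ] Lp ℂ 2 ν,
          (∀ n k : ℤ,
            Commute A ((U ^ n * T ^ k * U ^ (-n) : unitary _) : Lp ℂ 2 ν →L[ℂ] Lp ℂ 2 ν)) →
          Commute A B) ↔
        ∃ f : Solenoid N → ℂ, BddMeasurable f ∧
          ∀ ξ : Lp ℂ 2 ν, (B ξ : Solenoid N → ℂ) =ᵐ[ν]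
            fun z => f z * (ξ : Solenoid N → ℂ) z) ∧
      -- (3a) the commutant of the representation is
      -- `{M_f : f ∈ L^∞(ν), f∘S = f ν-a.e.}`
      (∀ A : Lp ℂ 2 ν →L[ℂ] Lp ℂ 2 ν,
        (Commute A (U : Lp ℂ 2 ν →L[ℂ] Lp ℂ 2 ν) ∧
         Commute A (T : Lp ℂ 2 ν →L[ℂ] Lp ℂ 2 ν)) ↔
        ∃ f : Solenoid N → ℂ, BddMeasurable f ∧
          (fun z => f (shift N z)) =ᵐ[ν] f ∧
          ∀ ξ : Lp ℂ 2 ν, (A ξ : Solenoid N → ℂ) =ᵐ[ν]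
            fun z => f z * (ξ : Solenoid N → ℂ) z) ∧
      -- (3b) irreducibility (trivial commutant) holds iff `S` is ergodic w.r.t. `ν`
      ((∀ A : Lp ℂ 2 ν →L[ℂ] Lp ℂ 2 ν,
          Commute A (U : Lp ℂ 2 ν →L[ℂ] Lp ℂ 2 ν) →
          Commute A (T : Lp ℂ 2 ν →L[ℂ] Lp ℂ 2 ν) →
          ∃ c : ℂ, A = c • (1 : Lp ℂ 2 ν →L[ℂ] Lp ℂ 2 ν)) ↔
        ShiftErgodic N ν) := by
  have hw := isUnitaryWeight_sqrt_rnDeriv hqi hθ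
  refine ⟨hw.weightedComp, mulCircle ν (coord N 0), ⟨hw.coeFn_weightedComp, coeFn_mulLp _⟩,
    weightedComp_mul_mulCircle_coord_mul_inv hw 0, ?conj, ?char, ?generated, ?commutant,
    irreducible_iff_shiftErgodic hw⟩
  case conj =>
    intro f hf A hA n
    obtain rfl : A = mulLp 2 ν ⟨f, hf⟩ := eq_mulLp_iff.2 hA
    rw [weightedComp_zpow_mul_mulLp_mul_zpow_neg]
    exact coeFn_mulLp _
  case char =>
    intro n k
    have hconj := weightedComp_zpow_mul_mulCircle_coord_zpow hw (-n) 0 k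
    rw [neg_neg, zero_sub, neg_neg] at hconj
    rw [hconj]
    exact coeFn_mulLp _
  case generated =>
    exact fun B => (mem_doubleCommutant_iff hw).trans
      ⟨fun ⟨f, hB⟩ => ⟨f, f.2, eq_mulLp_iff.1 hB.symm⟩,
        fun ⟨f, hf, hB⟩ => ⟨⟨f, hf⟩, (eq_mulLp_iff.2 hB).symm⟩⟩
  case commutant =>
    exact fun A => (commute_weightedComp_and_mulCircle_iff hw).trans
      ⟨fun ⟨f, hinv, hA⟩ => ⟨f, f.2, hinv, eq_mulLp_iff.1 hA⟩,
        fun ⟨f, hf, hinv, hA⟩ => ⟨⟨f, hf⟩, hinv, eq_mulLp_iff.2 hA⟩⟩
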